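/- Superadditivity over joint devices: let Pbar be a fully non-signaling four-partite device over finite sets A1, A2, B1, B2, X1, X2, Y1, Y2, and let P(a1,b1|x1,y1) := sum over (a2,b2) of Pbar(a1,a2,b1,b2|x1,x2,y1,y2) and Q(a2,b2|x2,y2) := sum over (a1,b1) of Pbar(a1,a2,b1,b2|x1,x2,y1,y2) be its marginal bipartite devices (well-defined by full non-signaling). Then N_sq(Pbar) >= N_sq(P) + N_sq(Q). -/

import Mathlib

/-- Shannon entropy (base-2) of a finitely supported real-valued distribution. -/
noncomputable def shannonEnt {α : Type} [Fintype α] (p : α → ℝ) : ℝ :=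
  -∑ a, p a * Real.logb 2 (p a)

/-- Shannon mutual information (base-2) of a joint distribution on `α × β`. -/
noncomputable def mutInfo {α β : Type} [Fintype α] [Fintype β] (R : α → β → ℝ) : ℝ :=
  shannonEnt (fun a => ∑ b, R a b) + shannonEnt (fun b => ∑ a, R a b) -
    shannonEnt (fun p : α × β => R p.1 p.2)

/-- A bipartite non-signaling device over finite output sets `A`, `B` and input
sets `X`, `Y`. -/
def IsDevice {A B X Y : Type} [Fintype A] [Fintype B] (P : A → B → X → Y → ℝ) : Prop :=
  (∀ a b x y, 0 ≤ P a b x y) ∧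
  (∀ x y, ∑ a, ∑ b, P a b x y = 1) ∧
  (∀ a x y y', ∑ b, P a b x y = ∑ b, P a b x y') ∧
  (∀ b y x x', ∑ a, P a b x y = ∑ a, P a b x' y)

/-- The set of values `∑_e p_e · I(A:B)_{P_e(·,·|x,y)}` over all (finite) ensembles
`{(p_e, P_e)}` of the device `P` into non-signaling devices. -/
def NsqSet {A B X Y : Type} [Fintype A] [Fintype B]
    (P : A → B → X → Y → ℝ) (x : X) (y : Y) : Set ℝ :=
  { r | ∃ (n : ℕ) (p : Fin n → ℝ) (Pe : Fin n → A → B → X → Y → ℝ),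
      (∀ i, 0 ≤ p i) ∧ (∑ i, p i = 1) ∧ (∀ i, IsDevice (Pe i)) ∧
      (∀ a b x' y', ∑ i, p i * Pe i a b x' y' = P a b x' y') ∧
      r = ∑ i, p i * mutInfo (fun a b => Pe i a b x y) }

/-- The squashed non-locality of a bipartite device: the maximum over inputs `(x,y)` of
the infimum over ensembles of the averaged mutual information at fixed inputs. -/
noncomputable def Nsq {A B X Y : Type} [Fintype A] [Fintype B] [Fintype X] [Fintype Y]
    [Nonempty X] [Nonempty Y] (P : A → B → X → Y → ℝ) : ℝ :=
  Finset.univ.sup' Finset.univ_nonempty (fun xy : X × Y => sInf (NsqSet P xy.1 xy.2))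

/-- A local device, i.e. one admitting a local hidden variable model. -/
def IsLocalDevice {A B X Y : Type} [Fintype A] [Fintype B] (P : A → B → X → Y → ℝ) : Prop :=
  ∃ (n : ℕ) (mu : Fin n → ℝ) (LA : A → X → Fin n → ℝ) (LB : B → Y → Fin n → ℝ),
    (∀ i, 0 ≤ mu i) ∧ (∑ i, mu i = 1) ∧
    (∀ a x i, 0 ≤ LA a x i) ∧ (∀ x i, ∑ a, LA a x i = 1) ∧
    (∀ b y i, 0 ≤ LB b y i) ∧ (∀ y i, ∑ b, LB b y i = 1) ∧
    (∀ a b x y, P a b x y = ∑ i, mu i * LA a x i * LB b y i)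

/-- A fully non-signaling four-partite device over output sets `A1, A2, B1, B2` and
input sets `X1, X2, Y1, Y2`: nonnegative, normalized, and no single subsystem can
signal to the rest (equivalently, no subset of subsystems can signal to the
complementary ones). -/
def IsDevice4 {A1 A2 B1 B2 X1 X2 Y1 Y2 : Type}
    [Fintype A1] [Fintype A2] [Fintype B1] [Fintype B2]
    (P : A1 → A2 → B1 → B2 → X1 → X2 → Y1 → Y2 → ℝ) : Prop :=
  (∀ a1 a2 b1 b2 x1 x2 y1 y2, 0 ≤ P a1 a2 b1 b2 x1 x2 y1 y2) ∧
  (∀ x1 x2 y1 y2, ∑ a1, ∑ a2, ∑ b1, ∑ b2, P a1 a2 b1 b2 x1 x2 y1 y2 = 1) ∧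
  (∀ a2 b1 b2 x2 y1 y2 x1 x1',
    ∑ a1, P a1 a2 b1 b2 x1 x2 y1 y2 = ∑ a1, P a1 a2 b1 b2 x1' x2 y1 y2) ∧
  (∀ a1 b1 b2 x1 y1 y2 x2 x2',
    ∑ a2, P a1 a2 b1 b2 x1 x2 y1 y2 = ∑ a2, P a1 a2 b1 b2 x1 x2' y1 y2) ∧
  (∀ a1 a2 b2 x1 x2 y2 y1 y1',
    ∑ b1, P a1 a2 b1 b2 x1 x2 y1 y2 = ∑ b1, P a1 a2 b1 b2 x1 x2 y1' y2) ∧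
  (∀ a1 a2 b1 x1 x2 y1 y2 y2',
    ∑ b2, P a1 a2 b1 b2 x1 x2 y1 y2 = ∑ b2, P a1 a2 b1 b2 x1 x2 y1 y2')

/-- The set of values `∑_e p_e · I(A1A2:B1B2)` over all ensembles of a four-partite
device into fully non-signaling four-partite devices, at fixed inputs. -/
def Nsq4Set {A1 A2 B1 B2 X1 X2 Y1 Y2 : Type}
    [Fintype A1] [Fintype A2] [Fintype B1] [Fintype B2]
    (P : A1 → A2 → B1 → B2 → X1 → X2 → Y1 → Y2 → ℝ)
    (x1 : X1) (x2 : X2) (y1 : Y1) (y2 : Y2) : Set ℝ :=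
  { r | ∃ (n : ℕ) (p : Fin n → ℝ) (Pe : Fin n → A1 → A2 → B1 → B2 → X1 → X2 → Y1 → Y2 → ℝ),
      (∀ i, 0 ≤ p i) ∧ (∑ i, p i = 1) ∧ (∀ i, IsDevice4 (Pe i)) ∧
      (∀ a1 a2 b1 b2 x1' x2' y1' y2',
        ∑ i, p i * Pe i a1 a2 b1 b2 x1' x2' y1' y2' = P a1 a2 b1 b2 x1' x2' y1' y2') ∧
      r = ∑ i, p i * mutInfo (fun (a : A1 × A2) (b : B1 × B2) =>
            Pe i a.1 a.2 b.1 b.2 x1 x2 y1 y2) }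

/-- The squashed non-locality of a four-partite device with respect to the bipartition
Alice = (A1,A2,X1,X2), Bob = (B1,B2,Y1,Y2). -/
noncomputable def Nsq4 {A1 A2 B1 B2 X1 X2 Y1 Y2 : Type}
    [Fintype A1] [Fintype A2] [Fintype B1] [Fintype B2]
    [Fintype X1] [Fintype X2] [Fintype Y1] [Fintype Y2]
    [Nonempty X1] [Nonempty X2] [Nonempty Y1] [Nonempty Y2]
    (P : A1 → A2 → B1 → B2 → X1 → X2 → Y1 → Y2 → ℝ) : ℝ :=
  Finset.univ.sup' Finset.univ_nonempty
    (fun t : (X1 × X2) × (Y1 × Y2) => sInf (Nsq4Set P t.1.1 t.1.2 t.2.1 t.2.2))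

/-!
Fix the inputs. By the chain rule,
`I(A₁A₂ : B₁B₂) = I(A₁ : B₁) + I(A₁ : B₂ | B₁) + I(A₂ : B₁ | A₁) + I(A₂ : B₂ | A₁B₁)`, and all
terms are nonnegative, so `I(A₁A₂ : B₁B₂) ≥ I(A₁ : B₁) + I(A₂ : B₂ | A₁B₁)`.
Given an ensemble `(pᵢ, Pᵢ)` of the four-partite device, the marginals of the `Pᵢ` on the first pair
form an ensemble of `P` whose value is the average of the first term. Letting the first pair be
measured and recording its outcome `(a₁, b₁)` refines the ensemble into one of `Q`, made of the
devices `Pᵢ(· | a₁, b₁)` with weights `pᵢ Pᵢ(a₁, b₁)`, and its value is the average of the second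
term. Hence every value of the four-partite device dominates a sum of values of `P` and `Q`.
-/

section Entropy

variable {α α' β γ : Type} [Fintype α] [Fintype α'] [Fintype β] [Fintype γ]

theorem sum_mul_logb_le_sum_mul_logb {ι : Type*} [Fintype ι] {b : ℝ} (hb : 1 < b) {p q : ι → ℝ}
    (hp : ∀ i, 0 ≤ p i) (hq : ∀ i, 0 ≤ q i) (hqp : ∀ i, q i = 0 → p i = 0)
    (hsum : ∑ i, q i ≤ ∑ i, p i) :
    ∑ i, p i * Real.logb b (q i) ≤ ∑ i, p i * Real.logb b (p i) := by
  have hterm (i : ι) : p i * Real.log (q i) - p i * Real.log (p i) ≤ q i - p i := by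
    obtain hpi | hpi := (hp i).eq_or_lt
    · simpa [← hpi] using hq i
    have hqi : 0 < q i := (hq i).lt_of_ne' fun h => hpi.ne' (hqp i h)
    calc p i * Real.log (q i) - p i * Real.log (p i)
        = p i * Real.log (q i / p i) := by rw [Real.log_div hqi.ne' hpi.ne', mul_sub]
      _ ≤ p i * (q i / p i - 1) :=
          mul_le_mul_of_nonneg_left (Real.log_le_sub_one_of_pos (div_pos hqi hpi)) hpi.le
      _ = q i - p i := by field_simp
  have hlog : ∑ i, p i * Real.log (q i) ≤ ∑ i, p i * Real.log (p i) := by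
    have := Finset.sum_le_sum fun i (_ : i ∈ Finset.univ) => hterm i
    simp only [Finset.sum_sub_distrib] at this
    linarith
  simp only [Real.logb, ← mul_div_assoc, ← Finset.sum_div]
  exact div_le_div_of_nonneg_right hlog (Real.log_pos hb).le

theorem eq_zero_of_mul_marginals_eq_zero {R : α → β → ℝ} (hR : ∀ a b, 0 ≤ R a b) {a : α} {b : β}
    (h : (∑ b', R a b') * ∑ a', R a' b = 0) : R a b = 0 := by
  obtain h | h := mul_eq_zero.1 h
  · exact (Finset.sum_eq_zero_iff_of_nonneg fun b' _ => hR a b').1 h b (Finset.mem_univ b)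
  · exact (Finset.sum_eq_zero_iff_of_nonneg fun a' _ => hR a' b).1 h a (Finset.mem_univ a)

theorem sum_mul_logb_mul_marginals {R : α → β → ℝ} (hR : ∀ a b, 0 ≤ R a b) :
    ∑ i : α × β, R i.1 i.2 * Real.logb 2 ((∑ b, R i.1 b) * ∑ a, R a i.2) =
      -shannonEnt (fun a => ∑ b, R a b) - shannonEnt (fun b => ∑ a, R a b) := by
  have hsplit (a : α) (b : β) : R a b * Real.logb 2 ((∑ b', R a b') * ∑ a', R a' b) =
      R a b * Real.logb 2 (∑ b', R a b') + R a b * Real.logb 2 (∑ a', R a' b) := by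
    by_cases h : R a b = 0
    · simp [h]
    obtain ⟨hrow, hcol⟩ := mul_ne_zero_iff.1 (mt (eq_zero_of_mul_marginals_eq_zero hR) h)
    rw [Real.logb_mul hrow hcol, mul_add]
  simp only [Fintype.sum_prod_type, hsplit, Finset.sum_add_distrib, shannonEnt]
  rw [Finset.sum_comm (f := fun a b => R a b * Real.logb 2 (∑ a', R a' b))]
  simp only [← Finset.sum_mul]
  ring

theorem mutInfo_nonneg {R : α → β → ℝ} (hR : ∀ a b, 0 ≤ R a b) (hR1 : ∑ a, ∑ b, R a b = 1) :
    0 ≤ mutInfo R := by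
  have hcol1 : ∑ b, ∑ a, R a b = 1 := by rw [Finset.sum_comm, hR1]
  have hrow0 (a : α) : 0 ≤ ∑ b, R a b := Finset.sum_nonneg fun b _ => hR a b
  have hcol0 (b : β) : 0 ≤ ∑ a, R a b := Finset.sum_nonneg fun a _ => hR a b
  have hgibbs := sum_mul_logb_le_sum_mul_logb one_lt_two (p := fun i : α × β => R i.1 i.2)
    (fun i => hR i.1 i.2) (fun i => mul_nonneg (hrow0 i.1) (hcol0 i.2))
    (fun _ => eq_zero_of_mul_marginals_eq_zero hR)
    (by simp only [Fintype.sum_prod_type, ← Finset.mul_sum, hcol1, mul_one, le_refl])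
  rw [sum_mul_logb_mul_marginals hR] at hgibbs
  have hjoint : shannonEnt (fun i : α × β => R i.1 i.2) =
      -∑ i : α × β, R i.1 i.2 * Real.logb 2 (R i.1 i.2) := rfl
  rw [mutInfo, hjoint]
  linarith

theorem shannonEnt_comp_equiv (e : α ≃ β) (p : β → ℝ) :
    shannonEnt (fun a => p (e a)) = shannonEnt p :=
  congrArg Neg.neg (Equiv.sum_comp e fun b => p b * Real.logb 2 (p b))

theorem mutInfo_comp_equiv (e : α ≃ α') (R : α' → β → ℝ) :
    mutInfo (fun a b => R (e a) b) = mutInfo R := by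
  have hjoint : shannonEnt (fun i : α × β => R (e i.1) i.2) =
      shannonEnt fun i : α' × β => R i.1 i.2 :=
    shannonEnt_comp_equiv (e.prodCongr (Equiv.refl β)) fun i => R i.1 i.2
  simp only [mutInfo, hjoint, shannonEnt_comp_equiv e fun a => ∑ b, R a b,
    fun b => Equiv.sum_comp e fun a => R a b]

theorem mutInfo_swap (R : α → β → ℝ) : mutInfo (fun b a => R a b) = mutInfo R := by
  have hjoint : shannonEnt (fun i : β × α => R i.2 i.1) =
      shannonEnt fun i : α × β => R i.1 i.2 :=
    shannonEnt_comp_equiv (Equiv.prodComm β α) fun i => R i.1 i.2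
  simp only [mutInfo, hjoint]
  ring

theorem sum_mul_shannonEnt_div_sum {p : α → ℝ} (hp : ∀ a, 0 ≤ p a) :
    (∑ a, p a) * shannonEnt (fun a => p a / ∑ a', p a') =
      shannonEnt p + (∑ a, p a) * Real.logb 2 (∑ a, p a) := by
  set s := ∑ a, p a with hs
  have hterm (a : α) : s * (p a / s * Real.logb 2 (p a / s)) =
      p a * Real.logb 2 (p a) - p a * Real.logb 2 s := by
    by_cases ha : p a = 0
    · simp [ha]
    have hs0 : s ≠ 0 := fun h =>
      ha ((Finset.sum_eq_zero_iff_of_nonneg fun a _ => hp a).1 h a (Finset.mem_univ a))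
    rw [Real.logb_div ha hs0]
    field_simp
  simp only [shannonEnt, mul_neg, Finset.mul_sum, hterm, Finset.sum_sub_distrib,
    ← Finset.sum_mul, ← hs]
  ring

/-- The conditional Shannon entropy `H(α | γ)` of a joint distribution on `γ × α`. Values `c` of
probability zero contribute `0`: their junk conditional distribution `0 / 0` has weight `0`. -/
noncomputable def condEnt (T : γ → α → ℝ) : ℝ :=
  ∑ c, (∑ a, T c a) * shannonEnt (fun a => T c a / ∑ a', T c a')

/-- The conditional mutual information `I(α : β | γ)` of a joint distribution on `γ × α × β`, with
the same convention as `condEnt`. -/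
noncomputable def condMutInfo (T : γ → α → β → ℝ) : ℝ :=
  ∑ c, (∑ a, ∑ b, T c a b) * mutInfo (fun a b => T c a b / ∑ a', ∑ b', T c a' b')

theorem condEnt_eq_sub {T : γ → α → ℝ} (hT : ∀ c a, 0 ≤ T c a) :
    condEnt T = shannonEnt (fun i : γ × α => T i.1 i.2) - shannonEnt (fun c => ∑ a, T c a) := by
  simp only [condEnt, fun c => sum_mul_shannonEnt_div_sum (hT c), Finset.sum_add_distrib]
  simp only [shannonEnt, Fintype.sum_prod_type, Finset.sum_neg_distrib]
  ring

theorem condMutInfo_eq_condEnt (T : γ → α → β → ℝ) :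
    condMutInfo T = condEnt (fun c a => ∑ b, T c a b) + condEnt (fun c b => ∑ a, T c a b) -
      condEnt (fun c (i : α × β) => T c i.1 i.2) := by
  have hcomm (c : γ) : ∑ b, ∑ a, T c a b = ∑ a, ∑ b, T c a b := Finset.sum_comm
  simp only [condMutInfo, mutInfo, condEnt, Fintype.sum_prod_type, hcomm, ← Finset.sum_div,
    mul_sub, mul_add, Finset.sum_add_distrib, Finset.sum_sub_distrib]

theorem condMutInfo_nonneg {T : γ → α → β → ℝ} (hT : ∀ c a b, 0 ≤ T c a b) :
    0 ≤ condMutInfo T := by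
  refine Finset.sum_nonneg fun c _ => ?_
  have hmass : 0 ≤ ∑ a, ∑ b, T c a b :=
    Finset.sum_nonneg fun a _ => Finset.sum_nonneg fun b _ => hT c a b
  obtain h0 | h0 := eq_or_ne (∑ a, ∑ b, T c a b) 0
  · simp [h0]
  · refine mul_nonneg hmass (mutInfo_nonneg (fun a b => div_nonneg (hT c a b) hmass) ?_)
    simp only [← Finset.sum_div, div_self h0]

theorem condMutInfo_swap (T : γ → α → β → ℝ) :
    condMutInfo (fun c b a => T c a b) = condMutInfo T := by
  refine Finset.sum_congr rfl fun c _ => ?_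
  rw [Finset.sum_comm]
  exact congrArg _ (mutInfo_swap _)

theorem mutInfo_prod_left {T : γ → α → β → ℝ} (hT : ∀ c a b, 0 ≤ T c a b) :
    mutInfo (fun (i : γ × α) b => T i.1 i.2 b) =
      mutInfo (fun c b => ∑ a, T c a b) + condMutInfo T := by
  have hcomm (c : γ) : ∑ b, ∑ a, T c a b = ∑ a, ∑ b, T c a b := Finset.sum_comm
  rw [condMutInfo_eq_condEnt, condEnt_eq_sub fun c a => Finset.sum_nonneg fun b _ => hT c a b,
    condEnt_eq_sub fun c b => Finset.sum_nonneg fun a _ => hT c a b,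
    condEnt_eq_sub (T := fun c (i : α × β) => T c i.1 i.2) fun c i => hT c i.1 i.2]
  unfold mutInfo
  rw [← shannonEnt_comp_equiv (Equiv.prodAssoc γ α β) fun i => T i.1 i.2.1 i.2.2]
  simp only [Fintype.sum_prod_type, hcomm, Equiv.prodAssoc_apply]
  ring

theorem condMutInfo_prod_left {T : γ → α → α' → β → ℝ} (hT : ∀ c a a' b, 0 ≤ T c a a' b) :
    condMutInfo (fun c (i : α × α') b => T c i.1 i.2 b) =
      condMutInfo (fun c a b => ∑ a', T c a a' b) +
        condMutInfo (fun (i : γ × α) a' b => T i.1 i.2 a' b) := by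
  have hjoint := mutInfo_prod_left (T := fun c (i : α × α') b => T c i.1 i.2 b)
    fun c i b => hT c i.1 i.2 b
  have hfst := mutInfo_prod_left (T := fun c a b => ∑ a', T c a a' b)
    fun c a b => Finset.sum_nonneg fun a' _ => hT c a a' b
  have hsnd := mutInfo_prod_left (T := fun (i : γ × α) a' b => T i.1 i.2 a' b)
    fun i a' b => hT i.1 i.2 a' b
  have hassoc := mutInfo_comp_equiv (Equiv.prodAssoc γ α α') fun i b => T i.1 i.2.1 i.2.2 b
  simp only [Fintype.sum_prod_type] at hjoint
  simp only [Equiv.prodAssoc_apply] at hassoc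
  linarith

variable {A1 A2 B1 B2 : Type} [Fintype A1] [Fintype A2] [Fintype B1] [Fintype B2]

theorem mutInfo_add_condMutInfo_le {R : A1 → A2 → B1 → B2 → ℝ}
    (hR : ∀ a1 a2 b1 b2, 0 ≤ R a1 a2 b1 b2) :
    mutInfo (fun a1 b1 => ∑ a2, ∑ b2, R a1 a2 b1 b2) +
        condMutInfo (fun (i : A1 × B1) a2 b2 => R i.1 a2 i.2 b2) ≤
      mutInfo (fun (a : A1 × A2) (b : B1 × B2) => R a.1 a.2 b.1 b.2) := by
  have hfst : mutInfo (fun a1 (b : B1 × B2) => ∑ a2, R a1 a2 b.1 b.2) =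
      mutInfo (fun a1 b1 => ∑ a2, ∑ b2, R a1 a2 b1 b2) +
        condMutInfo (fun b1 b2 a1 => ∑ a2, R a1 a2 b1 b2) := by
    have hcomm (a1 : A1) (b1 : B1) : ∑ b2, ∑ a2, R a1 a2 b1 b2 = ∑ a2, ∑ b2, R a1 a2 b1 b2 :=
      Finset.sum_comm
    rw [← mutInfo_swap, mutInfo_prod_left (T := fun b1 b2 a1 => ∑ a2, R a1 a2 b1 b2)
      fun b1 b2 a1 => Finset.sum_nonneg fun a2 _ => hR a1 a2 b1 b2]
    simp only [hcomm, mutInfo_swap fun a1 b1 => ∑ a2, ∑ b2, R a1 a2 b1 b2]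
  have hsnd : condMutInfo (fun a1 a2 (b : B1 × B2) => R a1 a2 b.1 b.2) =
      condMutInfo (fun a1 b1 a2 => ∑ b2, R a1 a2 b1 b2) +
        condMutInfo (fun (i : A1 × B1) a2 b2 => R i.1 a2 i.2 b2) := by
    rw [← condMutInfo_swap, condMutInfo_prod_left (T := fun a1 b1 b2 a2 => R a1 a2 b1 b2)
      fun a1 b1 b2 a2 => hR a1 a2 b1 b2,
      condMutInfo_swap fun (i : A1 × B1) a2 b2 => R i.1 a2 i.2 b2]
  rw [mutInfo_prod_left (T := fun a1 a2 (b : B1 × B2) => R a1 a2 b.1 b.2)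
    fun a1 a2 b => hR a1 a2 b.1 b.2, hfst, hsnd]
  have hfst0 : 0 ≤ condMutInfo (fun b1 b2 a1 => ∑ a2, R a1 a2 b1 b2) :=
    condMutInfo_nonneg fun b1 b2 a1 => Finset.sum_nonneg fun a2 _ => hR a1 a2 b1 b2
  have hsnd0 : 0 ≤ condMutInfo (fun a1 b1 a2 => ∑ b2, R a1 a2 b1 b2) :=
    condMutInfo_nonneg fun a1 b1 a2 => Finset.sum_nonneg fun b2 _ => hR a1 a2 b1 b2
  linarith

end Entropy

section Device

variable {A1 A2 B1 B2 X1 X2 Y1 Y2 : Type}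

/-- The bipartite device on the first pair of subsystems, obtained by feeding `x2` and `y2` into the
second pair and discarding its outputs. -/
def marginalFst [Fintype A2] [Fintype B2] (P : A1 → A2 → B1 → B2 → X1 → X2 → Y1 → Y2 → ℝ) (x2 : X2)
    (y2 : Y2) : A1 → B1 → X1 → Y1 → ℝ :=
  fun a1 b1 x1 y1 => ∑ a2, ∑ b2, P a1 a2 b1 b2 x1 x2 y1 y2

/-- The bipartite device on the second pair of subsystems, obtained by feeding `x1` and `y1` into
the first pair and discarding its outputs. -/
def marginalSnd [Fintype A1] [Fintype B1] (P : A1 → A2 → B1 → B2 → X1 → X2 → Y1 → Y2 → ℝ) (x1 : X1)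
    (y1 : Y1) : A2 → B2 → X2 → Y2 → ℝ :=
  fun a2 b2 x2 y2 => ∑ a1, ∑ b1, P a1 a2 b1 b2 x1 x2 y1 y2

/-- The bipartite device on the second pair of subsystems, given that the first pair returned
`(a1, b1)` on the inputs `(x1, y1)`. It is `0` when that event has probability zero. -/
noncomputable def condSnd [Fintype A2] [Fintype B2]
    (P : A1 → A2 → B1 → B2 → X1 → X2 → Y1 → Y2 → ℝ)
    (a1 : A1) (b1 : B1) (x1 : X1) (y1 : Y1) : A2 → B2 → X2 → Y2 → ℝ :=
  fun a2 b2 x2 y2 => P a1 a2 b1 b2 x1 x2 y1 y2 / marginalFst P x2 y2 a1 b1 x1 y1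

namespace IsDevice4

variable [Fintype A1] [Fintype A2] [Fintype B1] [Fintype B2]
  {P : A1 → A2 → B1 → B2 → X1 → X2 → Y1 → Y2 → ℝ}

theorem marginalFst_nonneg (h : IsDevice4 P) (x2 : X2) (y2 : Y2) (a1 : A1) (b1 : B1) (x1 : X1)
    (y1 : Y1) : 0 ≤ marginalFst P x2 y2 a1 b1 x1 y1 :=
  Finset.sum_nonneg fun _ _ => Finset.sum_nonneg fun _ _ => h.1 _ _ _ _ _ _ _ _

theorem marginalFst_eq_marginalFst (h : IsDevice4 P) (x2 x2' : X2) (y2 y2' : Y2) :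
    marginalFst P x2 y2 = marginalFst P x2' y2' := by
  obtain ⟨-, -, -, hA2, -, hB2⟩ := h
  funext a1 b1 x1 y1
  calc ∑ a2, ∑ b2, P a1 a2 b1 b2 x1 x2 y1 y2
      = ∑ a2, ∑ b2, P a1 a2 b1 b2 x1 x2 y1 y2' :=
        Finset.sum_congr rfl fun a2 _ => hB2 a1 a2 b1 x1 x2 y1 y2 y2'
    _ = ∑ b2, ∑ a2, P a1 a2 b1 b2 x1 x2 y1 y2' := Finset.sum_comm
    _ = ∑ b2, ∑ a2, P a1 a2 b1 b2 x1 x2' y1 y2' :=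
        Finset.sum_congr rfl fun b2 _ => hA2 a1 b1 b2 x1 y1 y2' x2 x2'
    _ = ∑ a2, ∑ b2, P a1 a2 b1 b2 x1 x2' y1 y2' := Finset.sum_comm

theorem isDevice_marginalFst (h : IsDevice4 P) (x2 : X2) (y2 : Y2) :
    IsDevice (marginalFst P x2 y2) := by
  have ⟨_, hone, hA1, _, hB1, _⟩ := h
  refine ⟨fun a1 b1 x1 y1 => h.marginalFst_nonneg x2 y2 a1 b1 x1 y1, fun x1 y1 => ?_,
    fun a1 x1 y1 y1' => ?_, fun b1 y1 x1 x1' => ?_⟩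
  · rw [← hone x1 x2 y1 y2]
    exact Finset.sum_congr rfl fun a1 _ => Finset.sum_comm
  · refine Finset.sum_comm_cycle.symm.trans (Eq.trans ?_ Finset.sum_comm_cycle)
    simp only [hB1 _ _ _ _ _ _ y1 y1']
  · refine Finset.sum_comm_cycle.symm.trans (Eq.trans ?_ Finset.sum_comm_cycle)
    simp only [hA1 _ _ _ _ _ _ x1 x1']

theorem isDevice_condSnd (h : IsDevice4 P) {x2 : X2} {y2 : Y2} {a1 : A1} {b1 : B1} {x1 : X1}
    {y1 : Y1} (hne : marginalFst P x2 y2 a1 b1 x1 y1 ≠ 0) :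
    IsDevice (condSnd P a1 b1 x1 y1) := by
  have hmarg (x2' : X2) (y2' : Y2) :
      marginalFst P x2' y2' a1 b1 x1 y1 = marginalFst P x2 y2 a1 b1 x1 y1 := by
    rw [h.marginalFst_eq_marginalFst x2' x2 y2' y2]
  have ⟨hnonneg, _, _, hA2, _, hB2⟩ := h
  refine ⟨fun a2 b2 x2 y2 => div_nonneg (hnonneg _ _ _ _ _ _ _ _) (h.marginalFst_nonneg ..),
    fun x2' y2' => ?_, fun a2 x2' y2' y2'' => ?_, fun b2 y2' x2' x2'' => ?_⟩
  · simp only [condSnd, ← Finset.sum_div]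
    exact div_self ((hmarg x2' y2').trans_ne hne)
  · simp only [condSnd, hmarg, ← Finset.sum_div, hB2 _ _ _ _ _ _ y2' y2'']
  · simp only [condSnd, hmarg, ← Finset.sum_div, hA2 _ _ _ _ _ _ x2' x2'']

theorem marginalFst_mul_condSnd (h : IsDevice4 P) (a1 : A1) (a2 : A2) (b1 : B1) (b2 : B2) (x1 : X1)
    (x2 : X2) (y1 : Y1) (y2 : Y2) :
    marginalFst P x2 y2 a1 b1 x1 y1 * condSnd P a1 b1 x1 y1 a2 b2 x2 y2 =
      P a1 a2 b1 b2 x1 x2 y1 y2 := by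
  refine mul_div_cancel_of_imp' fun hzero => ?_
  have hrow := (Finset.sum_eq_zero_iff_of_nonneg fun a2 _ =>
    Finset.sum_nonneg fun b2 _ => h.1 a1 a2 b1 b2 x1 x2 y1 y2).1 hzero a2 (Finset.mem_univ a2)
  exact (Finset.sum_eq_zero_iff_of_nonneg fun b2 _ =>
    h.1 a1 a2 b1 b2 x1 x2 y1 y2).1 hrow b2 (Finset.mem_univ b2)

end IsDevice4

end Device

section Ensemble

theorem sum_mul_mutInfo_mem_NsqSet {ι A B X Y : Type} [Fintype ι] [Fintype A] [Fintype B]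
    {P : A → B → X → Y → ℝ} {p : ι → ℝ} {Pe : ι → A → B → X → Y → ℝ} (hp : ∀ i, 0 ≤ p i)
    (hp1 : ∑ i, p i = 1) (hPe : ∀ i, p i ≠ 0 → IsDevice (Pe i))
    (hP : ∀ a b x y, ∑ i, p i * Pe i a b x y = P a b x y) (x : X) (y : Y) :
    ∑ i, p i * mutInfo (fun a b => Pe i a b x y) ∈ NsqSet P x y := by
  classical
  obtain ⟨j, -, hj⟩ := Finset.exists_ne_zero_of_sum_ne_zero (hp1.trans_ne one_ne_zero)
  -- `NsqSet` requires a device even at weight zero, where the member `j` serves as a substitute.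
  let k (i : ι) : ι := if p i = 0 then j else i
  have hk (i : ι) : p (k i) ≠ 0 := by
    by_cases hi : p i = 0 <;> simp [k, hi, hj]
  have hpk (i : ι) (f : ι → ℝ) : p i * f (k i) = p i * f i := by
    by_cases hi : p i = 0 <;> simp [k, hi]
  let e := (Fintype.equivFin ι).symm
  refine ⟨Fintype.card ι, fun i => p (e i), fun i => Pe (k (e i)), fun i => hp _,
    (Equiv.sum_comp e p).trans hp1, fun i => hPe _ (hk _), fun a b x' y' => ?_, ?_⟩
  · simp only [hpk _ fun i => Pe i a b x' y']
    exact (Equiv.sum_comp e fun i => p i * Pe i a b x' y').trans (hP a b x' y')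
  · simp only [hpk _ fun i => mutInfo fun a b => Pe i a b x y]
    exact (Equiv.sum_comp e fun i => p i * mutInfo fun a b => Pe i a b x y).symm

theorem bddBelow_NsqSet {A B X Y : Type} [Fintype A] [Fintype B] (P : A → B → X → Y → ℝ) (x : X)
    (y : Y) : BddBelow (NsqSet P x y) := by
  refine ⟨0, ?_⟩
  rintro r ⟨n, p, Pe, hp, -, hPe, -, rfl⟩
  exact Finset.sum_nonneg fun i _ => mul_nonneg (hp i)
    (mutInfo_nonneg (fun a b => (hPe i).1 a b x y) ((hPe i).2.1 x y))

variable {ι A1 A2 B1 B2 X1 X2 Y1 Y2 : Type} [Fintype ι]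
  [Fintype A1] [Fintype A2] [Fintype B1] [Fintype B2]
  {P : A1 → A2 → B1 → B2 → X1 → X2 → Y1 → Y2 → ℝ} {p : ι → ℝ}
  {Pe : ι → A1 → A2 → B1 → B2 → X1 → X2 → Y1 → Y2 → ℝ}

theorem sum_mul_mutInfo_marginalFst_mem_NsqSet (hp : ∀ i, 0 ≤ p i) (hp1 : ∑ i, p i = 1)
    (hPe : ∀ i, IsDevice4 (Pe i))
    (hP : ∀ a1 a2 b1 b2 x1 x2 y1 y2,
      ∑ i, p i * Pe i a1 a2 b1 b2 x1 x2 y1 y2 = P a1 a2 b1 b2 x1 x2 y1 y2)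
    (x1 : X1) (x2 : X2) (y1 : Y1) (y2 : Y2) :
    ∑ i, p i * mutInfo (fun a1 b1 => marginalFst (Pe i) x2 y2 a1 b1 x1 y1) ∈
      NsqSet (marginalFst P x2 y2) x1 y1 := by
  refine sum_mul_mutInfo_mem_NsqSet hp hp1 (fun i _ => (hPe i).isDevice_marginalFst x2 y2)
    (fun a1 b1 x1 y1 => ?_) x1 y1
  simp only [marginalFst, Finset.mul_sum, ← hP]
  exact (Finset.sum_comm_cycle ..).symm

theorem sum_mul_condMutInfo_mem_NsqSet (hp : ∀ i, 0 ≤ p i) (hp1 : ∑ i, p i = 1)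
    (hPe : ∀ i, IsDevice4 (Pe i))
    (hP : ∀ a1 a2 b1 b2 x1 x2 y1 y2,
      ∑ i, p i * Pe i a1 a2 b1 b2 x1 x2 y1 y2 = P a1 a2 b1 b2 x1 x2 y1 y2)
    (x1 : X1) (x2 : X2) (y1 : Y1) (y2 : Y2) :
    ∑ i, p i * condMutInfo (fun (j : A1 × B1) a2 b2 => Pe i j.1 a2 j.2 b2 x1 x2 y1 y2) ∈
      NsqSet (marginalSnd P x1 y1) x2 y2 := by
  let w (t : ι × A1 × B1) : ℝ := p t.1 * marginalFst (Pe t.1) x2 y2 t.2.1 t.2.2 x1 y1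
  have hw1 : ∑ t, w t = 1 := by
    simp only [w, Fintype.sum_prod_type, ← Finset.mul_sum,
      ((hPe _).isDevice_marginalFst x2 y2).2.1, mul_one, hp1]
  have hmix (a2 : A2) (b2 : B2) (x2' : X2) (y2' : Y2) :
      ∑ t, w t * condSnd (Pe t.1) t.2.1 t.2.2 x1 y1 a2 b2 x2' y2' =
        marginalSnd P x1 y1 a2 b2 x2' y2' := by
    simp only [w, mul_assoc, (hPe _).marginalFst_eq_marginalFst x2 x2' y2 y2',
      (hPe _).marginalFst_mul_condSnd, Fintype.sum_prod_type, marginalSnd, ← hP]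
    exact Finset.sum_comm_cycle.symm
  have hmem := sum_mul_mutInfo_mem_NsqSet (p := w)
    (fun t => mul_nonneg (hp _) ((hPe _).marginalFst_nonneg ..)) hw1
    (fun t ht => (hPe t.1).isDevice_condSnd (right_ne_zero_of_mul ht)) hmix x2 y2
  simp only [w, mul_assoc, Fintype.sum_prod_type, ← Finset.mul_sum] at hmem
  simp only [condMutInfo, Fintype.sum_prod_type]
  exact hmem

theorem sInf_NsqSet_add_sInf_NsqSet_le (hP : IsDevice4 P) (x1 : X1) (x2 : X2) (y1 : Y1) (y2 : Y2) :
    sInf (NsqSet (marginalFst P x2 y2) x1 y1) + sInf (NsqSet (marginalSnd P x1 y1) x2 y2) ≤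
      sInf (Nsq4Set P x1 x2 y1 y2) := by
  have hne : (Nsq4Set P x1 x2 y1 y2).Nonempty :=
    ⟨_, 1, fun _ => 1, fun _ => P, by simp, by simp, fun _ => hP, by simp, rfl⟩
  refine le_csInf hne ?_
  rintro r ⟨n, p, Pe, hp, hp1, hPe, hmix, rfl⟩
  refine (add_le_add
    (csInf_le (bddBelow_NsqSet _ _ _)
      (sum_mul_mutInfo_marginalFst_mem_NsqSet hp hp1 hPe hmix x1 x2 y1 y2))
    (csInf_le (bddBelow_NsqSet _ _ _)
      (sum_mul_condMutInfo_mem_NsqSet hp hp1 hPe hmix x1 x2 y1 y2))).trans ?_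
  rw [← Finset.sum_add_distrib]
  refine Finset.sum_le_sum fun i _ => ?_
  rw [← mul_add]
  exact mul_le_mul_of_nonneg_left
    (mutInfo_add_condMutInfo_le fun a1 a2 b1 b2 => (hPe i).1 a1 a2 b1 b2 x1 x2 y1 y2) (hp i)

end Ensemble

theorem exists_Nsq_eq_sInf {A B X Y : Type} [Fintype A] [Fintype B] [Fintype X] [Fintype Y]
    [Nonempty X] [Nonempty Y] (P : A → B → X → Y → ℝ) : ∃ x y, Nsq P = sInf (NsqSet P x y) := by
  obtain ⟨⟨x, y⟩, -, h⟩ := Finset.exists_mem_eq_sup' Finset.univ_nonempty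
    fun i : X × Y => sInf (NsqSet P i.1 i.2)
  exact ⟨x, y, h⟩

theorem sInf_Nsq4Set_le_Nsq4 {A1 A2 B1 B2 X1 X2 Y1 Y2 : Type}
    [Fintype A1] [Fintype A2] [Fintype B1] [Fintype B2]
    [Fintype X1] [Fintype X2] [Fintype Y1] [Fintype Y2]
    [Nonempty X1] [Nonempty X2] [Nonempty Y1] [Nonempty Y2]
    (P : A1 → A2 → B1 → B2 → X1 → X2 → Y1 → Y2 → ℝ) (x1 : X1) (x2 : X2) (y1 : Y1) (y2 : Y2) :
    sInf (Nsq4Set P x1 x2 y1 y2) ≤ Nsq4 P :=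
  Finset.le_sup' (fun t : (X1 × X2) × (Y1 × Y2) => sInf (Nsq4Set P t.1.1 t.1.2 t.2.1 t.2.2))
    (Finset.mem_univ ((x1, x2), (y1, y2)))

/-- Superadditivity of the squashed non-locality over joint non-signaling devices:
if `P` and `Q` are the (well-defined) marginal bipartite devices of a fully
non-signaling four-partite device `Pbar`, then `N_sq(Pbar) ≥ N_sq(P) + N_sq(Q)`. -/
theorem Nsq_superadditive {A1 A2 B1 B2 X1 X2 Y1 Y2 : Type}
    [Fintype A1] [Fintype A2] [Fintype B1] [Fintype B2]
    [Fintype X1] [Fintype X2] [Fintype Y1] [Fintype Y2]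
    [Nonempty X1] [Nonempty X2] [Nonempty Y1] [Nonempty Y2]
    (Pbar : A1 → A2 → B1 → B2 → X1 → X2 → Y1 → Y2 → ℝ) (hPbar : IsDevice4 Pbar)
    (P : A1 → B1 → X1 → Y1 → ℝ) (Q : A2 → B2 → X2 → Y2 → ℝ)
    (hPdef : ∀ a1 b1 x1 y1 x2 y2,
      P a1 b1 x1 y1 = ∑ a2, ∑ b2, Pbar a1 a2 b1 b2 x1 x2 y1 y2)
    (hQdef : ∀ a2 b2 x2 y2 x1 y1,
      Q a2 b2 x2 y2 = ∑ a1, ∑ b1, Pbar a1 a2 b1 b2 x1 x2 y1 y2) :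
    Nsq P + Nsq Q ≤ Nsq4 Pbar := by
  obtain ⟨x1, y1, hP⟩ := exists_Nsq_eq_sInf P
  obtain ⟨x2, y2, hQ⟩ := exists_Nsq_eq_sInf Q
  have hPmarg : P = marginalFst Pbar x2 y2 := by
    funext a1 b1 x y
    exact hPdef a1 b1 x y x2 y2
  have hQmarg : Q = marginalSnd Pbar x1 y1 := by
    funext a2 b2 x y
    exact hQdef a2 b2 x y x1 y1
  calc Nsq P + Nsq Q
      = sInf (NsqSet (marginalFst Pbar x2 y2) x1 y1) +
          sInf (NsqSet (marginalSnd Pbar x1 y1) x2 y2) := by rw [hP, hQ, ← hPmarg, ← hQmarg]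
    _ ≤ sInf (Nsq4Set Pbar x1 x2 y1 y2) := sInf_NsqSet_add_sInf_NsqSet_le hPbar x1 x2 y1 y2
    _ ≤ Nsq4 Pbar := sInf_Nsq4Set_le_Nsq4 Pbar x1 x2 y1 y2
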